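/- Necessity of the strong level-set subdifferential error bound: under Assumption H1 and the Bregman setting, suppose g is semiconvex with modulus ρ ≥ 0, 0 < ε, ε·L < m and ε·ρ < m, and let t(x) denote the unique element of T(x). Let x̄ ∈ ℝ^n, F̄ = F(x̄), ν > 0, and suppose there is β ∈ (0,1) such that infDist(t(x), [F ≤ F̄]) ≤ β · infDist(x, [F ≤ F̄]) for all x with F̄ < F(x) < F̄ + ν. Then for every x with F̄ < F(x) < F̄ + ν and every ν' ∈ ∂_P g(x): infDist(x, [F ≤ F̄]) ≤ (ε/((1 − β)(m − ερ))) · ‖∇f(x) + ν'‖. -/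

import Mathlib

open Set Metric Filter Topology
open scoped RealInnerProductSpace

noncomputable section

variable {E : Type*} [NormedAddCommGroup E] [InnerProductSpace ℝ E] [FiniteDimensional ℝ E]

/-- The proximal subdifferential of `ψ` at `x`. -/
def proxSubdiff (ψ : E → ℝ) (x : E) : Set E :=
  {ξ | ∃ ρ > (0:ℝ), ∃ η > (0:ℝ), ∀ y, ‖y - x‖ < η →
    ψ y ≥ ψ x + ⟪ξ, y - x⟫ - ρ * ‖y - x‖ ^ 2}

/-- The Bregman distance generated by `K` (with gradient `K'`). -/
def bregD (K : E → ℝ) (K' : E → E) (x y : E) : ℝ := K y - K x - ⟪K' x, y - x⟫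

/-- The Bregman proximal mapping: the set of global minimizers of
`y ↦ ⟪∇f x, y - x⟫ + g y + D(x,y)/ε`. -/
def bregT (f' : E → E) (g : E → ℝ) (K : E → ℝ) (K' : E → E) (ε : ℝ) (x : E) : Set E :=
  {y | ∀ z, ⟪f' x, y - x⟫ + g y + bregD K K' x y / ε ≤ ⟪f' x, z - x⟫ + g z + bregD K K' x z / ε}

/-- The Bregman proximal envelope. -/
def bregEnv (f : E → ℝ) (f' : E → E) (g : E → ℝ) (K : E → ℝ) (K' : E → E) (ε : ℝ) (x : E) : ℝ :=
  ⨅ y : E, (f x + ⟪f' x, y - x⟫ + g y + bregD K K' x y / ε)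

/-!
The objective minimized by the Bregman proximal mapping at `x` is strongly convex with modulus
`m / ε - ρ`, the kernel term compensating the nonconvexity of `g`. The vector `∇f x + ν'` is a
proximal subgradient of this objective at `x`, because the Bregman term is stationary there, while
`0` is one at the minimizer `t x`. Strong monotonicity of the proximal subdifferential therefore
bounds `‖x - t x‖` by `‖∇f x + ν'‖ / (m / ε - ρ)`, and the contraction of the distance to the level
set turns this into a bound on that distance.
-/

section ProximalSubgradients

variable {V : Type*} [NormedAddCommGroup V] [InnerProductSpace ℝ V]
  {φ ψ : V → ℝ} {s : Set V} {x y ξ ζ : V} {c μ : ℝ}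

theorem mem_proxSubdiff_of_forall_le
    (h : ∀ y, φ x + ⟪ξ, y - x⟫ + c / 2 * ‖y - x‖ ^ 2 ≤ φ y) : ξ ∈ proxSubdiff φ x := by
  refine ⟨|c| / 2 + 1, by positivity, 1, one_pos, fun y _ => ?_⟩
  have hc : -(|c| / 2 + 1) ≤ c / 2 := by linarith [neg_abs_le c]
  linarith [h y, mul_le_mul_of_nonneg_right hc (sq_nonneg ‖y - x‖)]

theorem zero_mem_proxSubdiff_of_isMinOn (h : IsMinOn φ univ x) : 0 ∈ proxSubdiff φ x :=
  mem_proxSubdiff_of_forall_le (c := 0) fun y => by simpa using h (mem_univ y)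

theorem add_mem_proxSubdiff (hξ : ξ ∈ proxSubdiff φ x) (hζ : ζ ∈ proxSubdiff ψ x) :
    ξ + ζ ∈ proxSubdiff (φ + ψ) x := by
  obtain ⟨a, ha, η, hη, hφ⟩ := hξ
  obtain ⟨b, hb, θ, hθ, hψ⟩ := hζ
  refine ⟨a + b, add_pos ha hb, min η θ, lt_min hη hθ, fun y hy => ?_⟩
  have hφy := hφ y (hy.trans_le (min_le_left _ _))
  have hψy := hψ y (hy.trans_le (min_le_right _ _))
  simp only [Pi.add_apply, inner_add_left]
  linarith

/- The local inequality at `x + r • (y - x)`, combined with strong convexity on the segment and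
divided by `r`, becomes the global one as `r → 0⁺`. -/
theorem add_inner_add_le_of_mem_proxSubdiff (hφ : StrongConvexOn s μ φ) (hx : x ∈ s) (hy : y ∈ s)
    (hξ : ξ ∈ proxSubdiff φ x) : φ x + ⟪ξ, y - x⟫ + μ / 2 * ‖y - x‖ ^ 2 ≤ φ y := by
  obtain ⟨a, -, η, hη, hsub⟩ := hξ
  set d := y - x with hd
  have hlim : Tendsto (fun r : ℝ => φ x + ⟪ξ, d⟫ + (1 - r) * (μ / 2 * ‖d‖ ^ 2) - a * r * ‖d‖ ^ 2)
      (𝓝[>] 0) (𝓝 (φ x + ⟪ξ, d⟫ + μ / 2 * ‖d‖ ^ 2)) :=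
    Continuous.tendsto' (by fun_prop) _ _ (by ring) |>.mono_left nhdsWithin_le_nhds
  have hnear : ∀ᶠ r : ℝ in 𝓝[>] 0, ‖r • d‖ < η :=
    (Continuous.tendsto' (by fun_prop) _ _ (by simp) |>.mono_left nhdsWithin_le_nhds).eventually_lt
      tendsto_const_nhds hη
  refine le_of_tendsto hlim ?_
  filter_upwards [hnear, Ioo_mem_nhdsGT one_pos] with r hr ⟨hr0, hr1⟩
  have hlower := hsub (x + r • d) (by simpa using hr)
  have hupper := hφ.2 hx hy (sub_nonneg.2 hr1.le) hr0.le (sub_add_cancel 1 r)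
  have hpoint : (1 - r) • x + r • y = x + r • d := by rw [hd]; module
  rw [add_sub_cancel_left, inner_smul_right, norm_smul, mul_pow, Real.norm_eq_abs, sq_abs] at hlower
  rw [hpoint, norm_sub_rev x y, ← hd, smul_eq_mul, smul_eq_mul] at hupper
  refine le_of_mul_le_mul_left ?_ hr0
  linarith

theorem mul_norm_sub_sq_le_inner_of_mem_proxSubdiff (hφ : StrongConvexOn s μ φ)
    (hx : x ∈ s) (hy : y ∈ s) (hξ : ξ ∈ proxSubdiff φ x) (hζ : ζ ∈ proxSubdiff φ y) :
    μ * ‖x - y‖ ^ 2 ≤ ⟪ξ - ζ, x - y⟫ := by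
  have hxy := add_inner_add_le_of_mem_proxSubdiff hφ hx hy hξ
  have hyx := add_inner_add_le_of_mem_proxSubdiff hφ hy hx hζ
  rw [← neg_sub x y, inner_neg_right, norm_neg] at hxy
  rw [inner_sub_left]
  linarith

theorem mul_norm_sub_le_norm_sub_of_mem_proxSubdiff (hφ : StrongConvexOn s μ φ)
    (hx : x ∈ s) (hy : y ∈ s) (hξ : ξ ∈ proxSubdiff φ x) (hζ : ζ ∈ proxSubdiff φ y) :
    μ * ‖x - y‖ ≤ ‖ξ - ζ‖ := by
  rcases (norm_nonneg (x - y)).eq_or_lt with h | h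
  · simp [← h]
  · refine le_of_mul_le_mul_right ?_ h
    calc μ * ‖x - y‖ * ‖x - y‖ = μ * ‖x - y‖ ^ 2 := by ring
      _ ≤ ⟪ξ - ζ, x - y⟫ := mul_norm_sub_sq_le_inner_of_mem_proxSubdiff hφ hx hy hξ hζ
      _ ≤ ‖ξ - ζ‖ * ‖x - y‖ := real_inner_le_norm _ _

theorem strongConvexOn_of_forall_add_inner_le {φ' : V → V} (hs : Convex ℝ s)
    (h : ∀ x ∈ s, ∀ y ∈ s, φ x + ⟪φ' x, y - x⟫ + μ / 2 * ‖y - x‖ ^ 2 ≤ φ y) :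
    StrongConvexOn s μ φ := by
  refine ⟨hs, fun x hx y hy a b ha hb hab => ?_⟩
  have hz : a • x + b • y ∈ s := hs hx hy ha hb hab
  have hzx := mul_le_mul_of_nonneg_left (h _ hz x hx) ha
  have hzy := mul_le_mul_of_nonneg_left (h _ hz y hy) hb
  obtain rfl : b = 1 - a := by linarith
  have hx' : x - (a • x + (1 - a) • y) = (1 - a) • (x - y) := by module
  have hy' : y - (a • x + (1 - a) • y) = -a • (x - y) := by module
  rw [hx', inner_smul_right, norm_smul, mul_pow, Real.norm_eq_abs, sq_abs] at hzx
  rw [hy', inner_smul_right, norm_smul, mul_pow, Real.norm_eq_abs, sq_abs] at hzy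
  simp only [smul_eq_mul]
  linarith

end ProximalSubgradients

theorem infDist_le_dist_div_one_sub {X : Type*} [PseudoMetricSpace X] {s : Set X} {x y : X} {β : ℝ}
    (hβ : β < 1) (h : infDist y s ≤ β * infDist x s) : infDist x s ≤ dist x y / (1 - β) := by
  rw [le_div_iff₀ (sub_pos.2 hβ)]
  linarith [infDist_le_infDist_add_dist (s := s) (x := x) (y := y)]

section BregmanProximal

variable {V : Type*} [NormedAddCommGroup V] [InnerProductSpace ℝ V]
  {g K : V → ℝ} {f' K' : V → V} {ε m σ : ℝ}

/-- The Bregman-regularized linear model at `x` with slope `v`, the part of the objective of `bregT`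
other than `g`. The constant value of the linearized function at `x` is left out, as in `bregT`. -/
def bregModel (v : V) (K : V → ℝ) (K' : V → V) (ε : ℝ) (x y : V) : ℝ :=
  ⟪v, y - x⟫ + bregD K K' x y / ε

theorem mem_bregT_iff_isMinOn {x p : V} :
    p ∈ bregT f' g K K' ε x ↔ IsMinOn (bregModel (f' x) K K' ε x + g) univ p := by
  simp only [bregT, mem_ofPred_eq, isMinOn_univ_iff, Pi.add_apply, bregModel, add_right_comm]

theorem bregModel_add_inner_le (hε : 0 < ε)
    (hK : ∀ x y : V, K x + ⟪K' x, y - x⟫ + m / 2 * ‖y - x‖ ^ 2 ≤ K y) (v x y z : V) :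
    bregModel v K K' ε x y + ⟪v + ε⁻¹ • (K' y - K' x), z - y⟫ + m / ε / 2 * ‖z - y‖ ^ 2 ≤
      bregModel v K K' ε x z := by
  have hD : bregD K K' x y + ⟪K' y - K' x, z - y⟫ + m / 2 * ‖z - y‖ ^ 2 ≤ bregD K K' x z := by
    have hsplit : ⟪K' x, z - x⟫ = ⟪K' x, z - y⟫ + ⟪K' x, y - x⟫ := by
      rw [← inner_add_right, sub_add_sub_cancel]
    simp only [bregD, inner_sub_left _ _ (z - y), hsplit]
    linarith [hK y z]
  have hv : ⟪v, z - x⟫ = ⟪v, z - y⟫ + ⟪v, y - x⟫ := by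
    rw [← inner_add_right, sub_add_sub_cancel]
  calc bregModel v K K' ε x y + ⟪v + ε⁻¹ • (K' y - K' x), z - y⟫ + m / ε / 2 * ‖z - y‖ ^ 2
      = ⟪v, z - x⟫ +
          (bregD K K' x y + ⟪K' y - K' x, z - y⟫ + m / 2 * ‖z - y‖ ^ 2) / ε := by
        rw [bregModel, inner_add_left, real_inner_smul_left, hv]
        ring
    _ ≤ ⟪v, z - x⟫ + bregD K K' x z / ε := by gcongr

theorem strongConvexOn_bregModel (hε : 0 < ε)
    (hK : ∀ x y : V, K x + ⟪K' x, y - x⟫ + m / 2 * ‖y - x‖ ^ 2 ≤ K y) (v x : V) :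
    StrongConvexOn univ (m / ε) (bregModel v K K' ε x) :=
  strongConvexOn_of_forall_add_inner_le convex_univ
    fun y _ z _ => bregModel_add_inner_le hε hK v x y z

theorem strongConvexOn_bregModel_add (hε : 0 < ε)
    (hK : ∀ x y : V, K x + ⟪K' x, y - x⟫ + m / 2 * ‖y - x‖ ^ 2 ≤ K y)
    (hg : StrongConvexOn univ σ g) (v x : V) :
    StrongConvexOn univ (m / ε + σ) (bregModel v K K' ε x + g) := by
  have hadd := UniformConvexOn.add (strongConvexOn_bregModel hε hK v x) hg
  exact hadd.mono fun r => by simp only [Pi.add_apply]; linarith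

theorem mem_proxSubdiff_bregModel_self (hε : 0 < ε)
    (hK : ∀ x y : V, K x + ⟪K' x, y - x⟫ + m / 2 * ‖y - x‖ ^ 2 ≤ K y) (v x : V) :
    v ∈ proxSubdiff (bregModel v K K' ε x) x :=
  mem_proxSubdiff_of_forall_le fun y => by simpa using bregModel_add_inner_le hε hK v x x y

theorem mul_norm_sub_le_norm_add_of_mem_bregT (hε : 0 < ε)
    (hK : ∀ x y : V, K x + ⟪K' x, y - x⟫ + m / 2 * ‖y - x‖ ^ 2 ≤ K y)
    (hg : StrongConvexOn univ σ g) {x p ξ : V} (hp : p ∈ bregT f' g K K' ε x)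
    (hξ : ξ ∈ proxSubdiff g x) : (m / ε + σ) * ‖x - p‖ ≤ ‖f' x + ξ‖ := by
  have hx := add_mem_proxSubdiff (mem_proxSubdiff_bregModel_self hε hK (f' x) x) hξ
  have hmin := zero_mem_proxSubdiff_of_isMinOn (mem_bregT_iff_isMinOn.1 hp)
  simpa using mul_norm_sub_le_norm_sub_of_mem_proxSubdiff
    (strongConvexOn_bregModel_add hε hK hg (f' x) x) (mem_univ x) (mem_univ p) hx hmin

theorem stmt16_general [CompleteSpace V]
    (f g : V → ℝ) (f' : V → V)
    (hf : ∀ x, HasGradientAt f (f' x) x)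
    (K : V → ℝ) (K' : V → V) (m : ℝ)
    (hK : ∀ x, HasGradientAt K (K' x) x)
    (hKstrong : ∀ x y : V, K x + ⟪K' x, y - x⟫ + m / 2 * ‖y - x‖ ^ 2 ≤ K y)
    (ε : ℝ) (hε : 0 < ε)
    (ρ : ℝ) (hsemi : ConvexOn ℝ univ fun y : V => g y + ρ / 2 * ‖y‖ ^ 2) (hερ : ε * ρ < m)
    (t : V → V) (ht : ∀ x, t x ∈ bregT f' g K K' ε x)
    (xbar : V) (ν β : ℝ) (hβ : β < 1)
    (hlin : ∀ y : V, f xbar + g xbar < f y + g y → f y + g y < f xbar + g xbar + ν →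
      infDist (t y) {z : V | f z + g z ≤ f xbar + g xbar} ≤
        β * infDist y {z : V | f z + g z ≤ f xbar + g xbar}) :
    ∀ y : V, f xbar + g xbar < f y + g y → f y + g y < f xbar + g xbar + ν →
      ∀ ν' ∈ proxSubdiff g y,
        infDist y {z : V | f z + g z ≤ f xbar + g xbar} ≤
          ε / ((1 - β) * (m - ε * ρ)) * ‖f' y + ν'‖ := by
  intro y hlt hltν ν' hν'
  have hβ' : 0 < 1 - β := sub_pos.2 hβ
  have hmρ : 0 < m - ε * ρ := sub_pos.2 hερ
  have hg : StrongConvexOn univ (-ρ) g :=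
    strongConvexOn_iff_convex.2 (by simpa [neg_div] using hsemi)
  have hmod : m / ε + -ρ = (m - ε * ρ) / ε := by field_simp; ring
  have hstep : (m - ε * ρ) / ε * ‖y - t y‖ ≤ ‖f' y + ν'‖ :=
    hmod ▸ mul_norm_sub_le_norm_add_of_mem_bregT hε hKstrong hg (ht y) hν'
  calc infDist y {z : V | f z + g z ≤ f xbar + g xbar}
      ≤ ‖y - t y‖ / (1 - β) :=
        dist_eq_norm y (t y) ▸ infDist_le_dist_div_one_sub hβ (hlin y hlt hltν)
    _ = ε / ((1 - β) * (m - ε * ρ)) * ((m - ε * ρ) / ε * ‖y - t y‖) := by field_simp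
    _ ≤ ε / ((1 - β) * (m - ε * ρ)) * ‖f' y + ν'‖ := by gcongr

end BregmanProximal

/-- Necessity of the strong level-set subdifferential error bound: linear decrease of
the level-set distance along the Bregman proximal mapping implies the error bound. -/
theorem stmt16
    (f g : E → ℝ) (f' : E → E) (L : ℝ)
    (hL : 0 < L)
    (hf : ∀ x, HasGradientAt f (f' x) x)
    (hlip : ∀ x y, ‖f' x - f' y‖ ≤ L * ‖x - y‖)
    (hg : Continuous g)
    (hlevel : ∀ r : ℝ, Bornology.IsBounded {x : E | f x + g x ≤ r})
    (K : E → ℝ) (K' : E → E) (m M : ℝ)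
    (hm : 0 < m) (hmM : m ≤ M)
    (hK : ∀ x, HasGradientAt K (K' x) x)
    (hKstrong : ∀ x y : E, K x + ⟪K' x, y - x⟫ + m / 2 * ‖y - x‖ ^ 2 ≤ K y)
    (hKlip : ∀ x y, ‖K' x - K' y‖ ≤ M * ‖x - y‖)
    (ε : ℝ) (hε : 0 < ε)
    (ρ : ℝ) (hρ : 0 ≤ ρ)
    (hsemi : ConvexOn ℝ Set.univ (fun y : E => g y + ρ / 2 * ‖y‖ ^ 2))
    (hεL : ε * L < m) (hερ : ε * ρ < m)
    (t : E → E) (ht : ∀ x, bregT f' g K K' ε x = {t x})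
    (xbar : E) (ν β : ℝ) (hν : 0 < ν) (hβ0 : 0 < β) (hβ1 : β < 1)
    (hlin : ∀ y : E, f xbar + g xbar < f y + g y → f y + g y < f xbar + g xbar + ν →
      Metric.infDist (t y) {z : E | f z + g z ≤ f xbar + g xbar} ≤
        β * Metric.infDist y {z : E | f z + g z ≤ f xbar + g xbar}) :
    ∀ y : E, f xbar + g xbar < f y + g y → f y + g y < f xbar + g xbar + ν →
      ∀ ν' ∈ proxSubdiff g y,
        Metric.infDist y {z : E | f z + g z ≤ f xbar + g xbar} ≤
          ε / ((1 - β) * (m - ε * ρ)) * ‖f' y + ν'‖ :=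
  stmt16_general f g f' hf K K' m hK hKstrong ε hε ρ hsemi hερ t (fun x => ht x ▸ mem_singleton _)
    xbar ν β hβ1 hlin
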